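/- arXiv:1703.02480 — 4 statements merged into one kernel-verified Lean document; each statement's English description precedes it below -/
import Mathlib

section
/- Let H = SL(2, ℤ/3ℤ), the special linear group of 2×2 matrices of determinant 1 over the field with three elements (isomorphic to the binary tetrahedral group of order 24). For any two elements x, y of H neither of which lies in the center of H, x and y commute if and only if the centralizer of x equals the centralizer of y. -/
/-!
Over any field, two `2 × 2` matrices commute exactly when their traceless parts, recorded by the
vectors `(b, c, a - d)`, are linearly dependent (`commute_fin_two_iff`). The vector of a
non-central matrix is nonzero, and dependence on a common nonzero vector is transitive, so
commuting is a transitive relation through non-central elements (`commute_trans_of_notMem_center`).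
Hence commuting non-central elements have the same centralizer. Conversely, `y` always lies in its
own centralizer. Nothing in the argument is specific to the field with three elements.
-/

/-- Commuting amounts to the vanishing of the cross product of the vectors `(b, c, a - d)`
attached to the two matrices. -/
lemma commute_fin_two_iff {F : Type*} [Field F] (x y : Matrix.SpecialLinearGroup (Fin 2) F) :
    Commute x y ↔
      x 0 1 * y 1 0 = x 1 0 * y 0 1 ∧
      x 0 1 * (y 0 0 - y 1 1) = (x 0 0 - x 1 1) * y 0 1 ∧
      x 1 0 * (y 0 0 - y 1 1) = (x 0 0 - x 1 1) * y 1 0 := by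
  rw [commute_iff_eq, Matrix.SpecialLinearGroup.ext_iff]
  simp only [Matrix.SpecialLinearGroup.coe_mul, Fin.forall_fin_two, Matrix.mul_apply, Fin.sum_univ_two]
  constructor
  · rintro ⟨⟨h₁, h₂⟩, h₃, -⟩
    refine ⟨?_, ?_, ?_⟩
    · linear_combination h₁
    · linear_combination -h₂
    · linear_combination h₃
  · rintro ⟨h₁, h₂, h₃⟩
    refine ⟨⟨?_, ?_⟩, ?_, ?_⟩
    · linear_combination h₁
    · linear_combination -h₂
    · linear_combination h₃
    · linear_combination -h₁

lemma commute_trans_of_notMem_center {F : Type*} [Field F]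
    {x y z : Matrix.SpecialLinearGroup (Fin 2) F}
    (hy : y ∉ Subgroup.center (Matrix.SpecialLinearGroup (Fin 2) F))
    (hxy : Commute x y) (hyz : Commute y z) : Commute x z := by
  -- The vector of `y` is nonzero, since otherwise `y` would be scalar.
  have hne : y 0 1 ≠ 0 ∨ y 1 0 ≠ 0 ∨ y 0 0 - y 1 1 ≠ 0 := by
    by_contra! h
    obtain ⟨hb, hc, hd⟩ := h
    refine hy (Subgroup.mem_center_iff.mpr fun g => ?_)
    exact (commute_fin_two_iff g y).mpr (by simp [hb, hc, hd])
  rw [commute_fin_two_iff] at hxy hyz ⊢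
  obtain ⟨h₁, h₂, h₃⟩ := hxy
  obtain ⟨k₁, k₂, k₃⟩ := hyz
  -- Each coordinate of the cross product vanishes after scaling by a nonzero coordinate of `y`.
  rcases hne with h | h | h
  · refine ⟨mul_left_cancel₀ h ?_, mul_left_cancel₀ h ?_, mul_left_cancel₀ h ?_⟩ <;> grind
  · refine ⟨mul_left_cancel₀ h ?_, mul_left_cancel₀ h ?_, mul_left_cancel₀ h ?_⟩ <;> grind
  · refine ⟨mul_left_cancel₀ h ?_, mul_left_cancel₀ h ?_, mul_left_cancel₀ h ?_⟩ <;> grind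

/-- In `SL(2, ℤ/3ℤ)` (isomorphic to the binary tetrahedral group `BT₂₄`), two
noncentral elements commute if and only if their centralizers coincide. -/
theorem commute_iff_centralizer_eq_SL2_ZMod3
    (x y : Matrix.SpecialLinearGroup (Fin 2) (ZMod 3))
    (hx : x ∉ Subgroup.center (Matrix.SpecialLinearGroup (Fin 2) (ZMod 3)))
    (hy : y ∉ Subgroup.center (Matrix.SpecialLinearGroup (Fin 2) (ZMod 3))) :
    Commute x y ↔ Subgroup.centralizer {x} = Subgroup.centralizer {y} := by
  have mem (a g : Matrix.SpecialLinearGroup (Fin 2) (ZMod 3)) :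
      g ∈ Subgroup.centralizer {a} ↔ Commute a g := by
    simp [Subgroup.mem_centralizer_iff, commute_iff_eq]
  constructor
  · intro h
    ext g
    rw [mem, mem]
    exact ⟨commute_trans_of_notMem_center hx h.symm, commute_trans_of_notMem_center hy h⟩
  · intro h
    rw [← mem, h, mem]
end

section
/- Let H = SL(2, ℤ/3ℤ), a group of order 24. Every element of H not lying in the center has centralizer of cardinality 4 or 6; moreover, exactly 6 elements of H have centralizer of cardinality 4 and exactly 16 elements have centralizer of cardinality 6. (This reflects the decomposition C(BT_{24}) ≅ K_2 ∨ (3K_2 ∪ 4K_4) of the commuting graph of the binary tetrahedral group.) -/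
/-!
An element of `SL(2, ℤ/3ℤ)` is a quadruple of entries in `ℤ/3ℤ` with `ad - bc = 1`, and two such
matrices commute iff `bc' = b'c`, `(a - d)b' = (a' - d')b` and `(a - d)c' = (a' - d')c`.
Counting the solutions over the `81` quadruples shows that the size of a centralizer is governed by
the trace (`commCount_eq`): it is `4` for trace `0`, where `x² = -1`, and, for nonzero trace,
`24` for `±1` and `6` for the remaining elements, which are `±` a nontrivial unipotent.
There are `6` elements of trace `0`, and hence `24 - 6 - 2 = 16` of the last kind.
-/

namespace CentralizerSL2

open Matrix

/-- Quadruples `(a, b, c, d)`, standing for the matrix with rows `(a, b)` and `(c, d)`. -/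
abbrev Quad := ZMod 3 × ZMod 3 × ZMod 3 × ZMod 3

/-- The quadruple represents a matrix of determinant one. -/
abbrev DetOne (p : Quad) : Prop := p.1 * p.2.2.2 - p.2.1 * p.2.2.1 = 1

/-- The matrices represented by the two quadruples commute. -/
abbrev Comm (p q : Quad) : Prop :=
  p.2.1 * q.2.2.1 = q.2.1 * p.2.2.1 ∧
  (p.1 - p.2.2.2) * q.2.1 = (q.1 - q.2.2.2) * p.2.1 ∧
  (p.1 - p.2.2.2) * q.2.2.1 = (q.1 - q.2.2.2) * p.2.2.1

/-- The quadruple represents a scalar matrix. -/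
abbrev IsScalar (p : Quad) : Prop := p.2.1 = 0 ∧ p.2.2.1 = 0 ∧ p.1 = p.2.2.2

/-- The number of determinant-one quadruples commuting with `p`. -/
def commCount (p : Quad) : ℕ := (Finset.univ.filter fun q => DetOne q ∧ Comm p q).card

/-- The entries of a matrix, as a quadruple of determinant one. -/
def quadEquiv : Matrix.SpecialLinearGroup (Fin 2) (ZMod 3) ≃ {p : Quad // DetOne p} where
  toFun x := ⟨(x.1 0 0, x.1 0 1, x.1 1 0, x.1 1 1), by
    have h := x.2
    rwa [det_fin_two] at h⟩
  invFun p := ⟨!![p.1.1, p.1.2.1; p.1.2.2.1, p.1.2.2.2], by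
    rw [det_fin_two_of]; exact p.2⟩
  left_inv x := Subtype.ext (eta_fin_two x.1).symm
  right_inv _ := rfl

lemma mul_comm_iff (x y : Matrix.SpecialLinearGroup (Fin 2) (ZMod 3)) :
    x * y = y * x ↔ Comm (quadEquiv x).1 (quadEquiv y).1 := by
  rw [Matrix.SpecialLinearGroup.ext_iff]
  simp only [Matrix.SpecialLinearGroup.coe_mul, mul_apply, Fin.sum_univ_two, Fin.forall_fin_two,
    quadEquiv]
  constructor
  · rintro ⟨⟨h₁, h₂⟩, h₃, h₄⟩
    exact ⟨by linear_combination h₁, by linear_combination h₂, by linear_combination -h₃⟩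
  · rintro ⟨h₁, h₂, h₃⟩
    exact ⟨⟨by linear_combination h₁, by linear_combination h₂⟩,
      by linear_combination -h₃, by linear_combination -h₁⟩

/-- Counting matrices with a property reduces to a decidable count over quadruples. -/
lemma card_subtype (P : Matrix.SpecialLinearGroup (Fin 2) (ZMod 3) → Prop) (Q : Quad → Prop)
    [DecidablePred Q] (h : ∀ x, P x ↔ Q (quadEquiv x).1) :
    Nat.card {x // P x} = (Finset.univ.filter fun q => DetOne q ∧ Q q).card := by
  rw [Nat.card_congr ((quadEquiv.subtypeEquiv (q := fun p => Q p.1) h).trans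
    (Equiv.subtypeSubtypeEquivSubtypeInter DetOne Q)), Nat.card_eq_fintype_card,
    Fintype.card_subtype]

lemma card_centralizer (x : Matrix.SpecialLinearGroup (Fin 2) (ZMod 3)) :
    Nat.card (Subgroup.centralizer {x}) = commCount (quadEquiv x).1 :=
  card_subtype (fun y => y ∈ Subgroup.centralizer {x}) (Comm (quadEquiv x).1) fun y => by
    rw [Subgroup.mem_centralizer_singleton_iff, eq_comm, mul_comm_iff]

/-- The size of a centralizer, in terms of the trace and of being scalar. -/
lemma commCount_eq : ∀ p : Quad, DetOne p →
    commCount p = if p.1 + p.2.2.2 = 0 then 4 else if IsScalar p then 24 else 6 := by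
  decide +kernel

lemma card_trace_zero :
    (Finset.univ.filter fun p : Quad => DetOne p ∧ p.1 + p.2.2.2 = 0).card = 6 := by
  decide +kernel

lemma card_trace_ne_zero_nonscalar :
    (Finset.univ.filter fun p : Quad =>
      DetOne p ∧ (p.1 + p.2.2.2 ≠ 0 ∧ ¬ IsScalar p)).card = 16 := by
  decide +kernel

lemma mem_center_of_isScalar (x : Matrix.SpecialLinearGroup (Fin 2) (ZMod 3))
    (h : IsScalar (quadEquiv x).1) : x ∈ Subgroup.center _ := by
  rw [Subgroup.mem_center_iff]
  intro y
  rw [eq_comm, mul_comm_iff]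
  obtain ⟨h₁, h₂, h₃⟩ := h
  simp [Comm, h₁, h₂, h₃]

end CentralizerSL2

open CentralizerSL2 in
/-- In the group `H = SL(2, ℤ/3ℤ)` of order 24 (isomorphic to the binary tetrahedral
group `BT₂₄`), every noncentral element has centralizer of cardinality 4 or 6; exactly
6 elements have centralizer of cardinality 4 and exactly 16 elements have centralizer
of cardinality 6. This reflects the decomposition `C(BT₂₄) ≅ K₂ ∨ (3K₂ ∪ 4K₄)` of the
commuting graph. -/
theorem centralizer_cards_SL2_ZMod3 :
    (∀ x : Matrix.SpecialLinearGroup (Fin 2) (ZMod 3),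
      x ∉ Subgroup.center (Matrix.SpecialLinearGroup (Fin 2) (ZMod 3)) →
      Nat.card (Subgroup.centralizer {x}) = 4 ∨
        Nat.card (Subgroup.centralizer {x}) = 6) ∧
    Nat.card {x : Matrix.SpecialLinearGroup (Fin 2) (ZMod 3) //
      Nat.card (Subgroup.centralizer {x}) = 4} = 6 ∧
    Nat.card {x : Matrix.SpecialLinearGroup (Fin 2) (ZMod 3) //
      Nat.card (Subgroup.centralizer {x}) = 6} = 16 := by
  have key (x : Matrix.SpecialLinearGroup (Fin 2) (ZMod 3)) :=
    (card_centralizer x).trans (commCount_eq _ (quadEquiv x).2)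
  refine ⟨fun x hx => ?_, ?_, ?_⟩
  · have hs := mt (mem_center_of_isScalar x) hx
    rw [key, if_neg hs]
    split_ifs <;> simp
  · rw [card_subtype _ (fun p => p.1 + p.2.2.2 = 0), card_trace_zero]
    intro x
    rw [key]
    split_ifs <;> simp_all
  · rw [card_subtype _ (fun p => p.1 + p.2.2.2 ≠ 0 ∧ ¬ IsScalar p),
      card_trace_ne_zero_nonscalar]
    intro x
    rw [key]
    split_ifs <;> simp_all
end

section
/- Let H = SL(2, ℤ/5ℤ), the special linear group of 2×2 matrices of determinant 1 over the field with five elements (isomorphic to the binary icosahedral group of order 120). For any two elements x, y of H neither of which lies in the center of H, x and y commute if and only if the centralizer of x equals the centralizer of y. -/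
/-!
Sending a `2 × 2` matrix `A` to `(A₀₁, A₁₀, A₀₀ - A₁₁)` identifies matrices modulo scalars with
`F³`, and two matrices commute exactly when the cross product of their images vanishes, i.e. when
the images are parallel. Parallelism is transitive through a nonzero vector, so commutation over a
field is transitive through a nonscalar matrix. The noncentral elements of `SL(2, F)` are the
nonscalar ones, so commuting noncentral elements have the same centralizer; conversely every
element lies in its own centralizer.
-/

/-- Two `2 × 2` matrices commute iff their classes modulo scalars are parallel. -/
lemma commute_iff_parallel {R : Type*} [CommRing R] (A B : Matrix (Fin 2) (Fin 2) R) :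
    Commute A B ↔ A 0 1 * B 1 0 = A 1 0 * B 0 1 ∧
      (A 0 0 - A 1 1) * B 0 1 = A 0 1 * (B 0 0 - B 1 1) ∧
      (A 0 0 - A 1 1) * B 1 0 = A 1 0 * (B 0 0 - B 1 1) := by
  rw [commute_iff_eq, ← Matrix.ext_iff]
  simp only [Fin.forall_fin_two, Matrix.mul_apply, Fin.sum_univ_two]
  constructor
  · rintro ⟨⟨h₁, h₂⟩, h₃, -⟩
    exact ⟨by linear_combination h₁, by linear_combination h₂, by linear_combination -h₃⟩
  · rintro ⟨h₁, h₂, h₃⟩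
    exact ⟨⟨by linear_combination h₁, by linear_combination h₂⟩,
      by linear_combination -h₃, by linear_combination -h₁⟩

lemma commute_trans_of_nonscalar {F : Type*} [Field F] {A B C : Matrix (Fin 2) (Fin 2) F}
    (hB : ¬ (B 0 1 = 0 ∧ B 1 0 = 0 ∧ B 0 0 - B 1 1 = 0))
    (hAB : Commute A B) (hBC : Commute B C) : Commute A C := by
  rw [commute_iff_parallel] at *
  generalize A 0 0 - A 1 1 = a at *
  generalize B 0 0 - B 1 1 = b at *
  generalize C 0 0 - C 1 1 = c at *
  obtain ⟨h₁, h₂, h₃⟩ := hAB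
  obtain ⟨k₁, k₂, k₃⟩ := hBC
  by_cases h01 : B 0 1 = 0
  · by_cases h10 : B 1 0 = 0
    · have hb : b ≠ 0 := fun h => hB ⟨h01, h10, h⟩
      simp_all
    · refine ⟨?_, ?_, ?_⟩ <;> apply mul_left_cancel₀ h10 <;> grind
  · refine ⟨?_, ?_, ?_⟩ <;> apply mul_left_cancel₀ h01 <;> grind

/-- In `SL(2, ℤ/5ℤ)` (isomorphic to the binary icosahedral group `BI₁₂₀`), two
noncentral elements commute if and only if their centralizers coincide. -/
theorem commute_iff_centralizer_eq_SL2_ZMod5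
    (x y : Matrix.SpecialLinearGroup (Fin 2) (ZMod 5))
    (hx : x ∉ Subgroup.center (Matrix.SpecialLinearGroup (Fin 2) (ZMod 5)))
    (hy : y ∉ Subgroup.center (Matrix.SpecialLinearGroup (Fin 2) (ZMod 5))) :
    Commute x y ↔ Subgroup.centralizer {x} = Subgroup.centralizer {y} := by
  have : Fact (Nat.Prime 5) := ⟨Nat.prime_five⟩
  constructor
  · intro h
    ext g
    simp only [Subgroup.mem_centralizer_singleton_iff, ← commute_iff_eq]
    exact ⟨fun hg => commute_trans_of_notMem_center hx hg h,
      fun hg => commute_trans_of_notMem_center hy hg h.symm⟩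
  · intro h
    have hmem : x ∈ Subgroup.centralizer {x} := Subgroup.mem_centralizer_singleton_iff.mpr rfl
    rw [h] at hmem
    exact Subgroup.mem_centralizer_singleton_iff.mp hmem
end

section
/- Let H = SL(2, ℤ/5ℤ), a group of order 120. Every element of H not lying in the center has centralizer of cardinality 4, 6, or 10; moreover, exactly 30 elements of H have centralizer of cardinality 4, exactly 40 have centralizer of cardinality 6, and exactly 48 have centralizer of cardinality 10. (This reflects the decomposition C(BI_{120}) ≅ K_2 ∨ (15K_2 ∪ 10K_4 ∪ 6K_8) of the commuting graph of the binary icosahedral group.) -/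
/-!
For a non-scalar `2 × 2` matrix `x` over a field, every matrix commuting with `x` has the form
`a + b x` for a unique pair `(a, b)`. If `det x = 1` and `t = tr x`, then
`det (a + b x) = a² + a b t + b²`, so the centralizer of `x` in `SL(2, K)` is in bijection with the
solutions of `a² + a b t + b² = 1` (`card_centralizer_of_nonscalar`). Over `ℤ/5ℤ` the number of
solutions is `4` for `t = 0`, `6` for `t = ±1` and `10` for `t = ±2`
(`card_norm_one_solutions`).

A scalar matrix is central, so its centralizer is the whole group, whose order is divisible by
`4`, `6` and `10` by Lagrange's theorem and hence is none of these numbers. It remains to count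
the non-scalar matrices of determinant `1` with a given trace, a finite enumeration over the four
matrix entries.
-/

/-- A `2 × 2` matrix of determinant one is non-scalar: it has a nonzero off-diagonal entry or two
distinct diagonal entries. -/
def SL2NonScalar {K : Type*} [CommRing K] (x : Matrix.SpecialLinearGroup (Fin 2) K) : Prop :=
  x 0 1 ≠ 0 ∨ x 1 0 ≠ 0 ∨ x 0 0 ≠ x 1 1

lemma mul_eq_mul_iff_entries {K : Type*} [CommRing K] (x y : Matrix.SpecialLinearGroup (Fin 2) K) :
    x * y = y * x ↔
      x 0 1 * y 1 0 = y 0 1 * x 1 0 ∧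
      x 0 0 * y 0 1 + x 0 1 * y 1 1 = y 0 0 * x 0 1 + y 0 1 * x 1 1 ∧
      x 1 0 * y 0 0 + x 1 1 * y 1 0 = y 1 0 * x 0 0 + y 1 1 * x 1 0 := by
  rw [Matrix.SpecialLinearGroup.ext_iff]
  simp only [Fin.forall_fin_two, Matrix.SpecialLinearGroup.coe_mul, Matrix.mul_apply,
    Fin.sum_univ_two]
  constructor
  · rintro ⟨⟨h1, h2⟩, h3, h4⟩
    exact ⟨by linear_combination h1, h2, h3⟩
  · rintro ⟨h1, h2, h3⟩
    exact ⟨⟨by linear_combination h1, h2⟩, h3, by linear_combination -h1⟩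

lemma mem_center_of_not_nonscalar {K : Type*} [CommRing K]
    {x : Matrix.SpecialLinearGroup (Fin 2) K} (hx : ¬ SL2NonScalar x) :
    x ∈ Subgroup.center (Matrix.SpecialLinearGroup (Fin 2) K) := by
  simp only [SL2NonScalar, not_or, not_not] at hx
  obtain ⟨h1, h2, h3⟩ := hx
  rw [Subgroup.mem_center_iff]
  intro g
  rw [mul_eq_mul_iff_entries, h1, h2, h3]
  refine ⟨?_, ?_, ?_⟩ <;> ring

lemma det_entries {K : Type*} [CommRing K] (x : Matrix.SpecialLinearGroup (Fin 2) K) :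
    x 0 0 * x 1 1 - x 0 1 * x 1 0 = 1 := by
  rw [← Matrix.det_fin_two]
  exact x.2

/-- The matrix `a + b x`, as an element of `SL(2, K)` when `a² + a b tr x + b² = 1`. -/
def affineSL2 {K : Type*} [CommRing K] (x : Matrix.SpecialLinearGroup (Fin 2) K)
    (p : K × K) (hp : p.1 ^ 2 + p.1 * p.2 * (x 0 0 + x 1 1) + p.2 ^ 2 = 1) :
    Matrix.SpecialLinearGroup (Fin 2) K :=
  ⟨!![p.1 + p.2 * x 0 0, p.2 * x 0 1; p.2 * x 1 0, p.1 + p.2 * x 1 1], by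
    rw [Matrix.det_fin_two_of]
    linear_combination hp + p.2 ^ 2 * det_entries x⟩

/-- A matrix commuting with a non-scalar `x` is an affine expression in `x`. The field property is a
hypothesis on a commutative ring, so that for `ZMod 5` the ring structure is the usual one. -/
lemma exists_affine_of_commute {K : Type*} [CommRing K] (hK : IsField K)
    {x y : Matrix.SpecialLinearGroup (Fin 2) K} (hx : SL2NonScalar x) (h : x * y = y * x) :
    ∃ a b : K, y 0 0 = a + b * x 0 0 ∧ y 0 1 = b * x 0 1 ∧ y 1 0 = b * x 1 0 ∧
      y 1 1 = a + b * x 1 1 := by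
  obtain ⟨h1, h2, h3⟩ := (mul_eq_mul_iff_entries x y).1 h
  -- It suffices to find `b`, since `a` is then determined by the upper left entry.
  suffices ∃ b : K, y 0 1 = b * x 0 1 ∧ y 1 0 = b * x 1 0 ∧
      y 1 1 - y 0 0 = b * (x 1 1 - x 0 0) by
    obtain ⟨b, e1, e2, e3⟩ := this
    exact ⟨y 0 0 - b * x 0 0, b, by ring, e1, e2, by linear_combination e3⟩
  rcases hx with hx | hx | hx
  · obtain ⟨i, hi⟩ := hK.mul_inv_cancel hx
    exact ⟨y 0 1 * i, by linear_combination -y 0 1 * hi,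
      by linear_combination i * h1 - y 1 0 * hi,
      by linear_combination i * h2 - (y 1 1 - y 0 0) * hi⟩
  · obtain ⟨i, hi⟩ := hK.mul_inv_cancel hx
    exact ⟨y 1 0 * i, by linear_combination -i * h1 - y 0 1 * hi,
      by linear_combination -y 1 0 * hi,
      by linear_combination -i * h3 - (y 1 1 - y 0 0) * hi⟩
  · obtain ⟨i, hi⟩ := hK.mul_inv_cancel (sub_ne_zero.2 (Ne.symm hx))
    exact ⟨(y 1 1 - y 0 0) * i, by linear_combination -i * h2 - y 0 1 * hi,
      by linear_combination i * h3 - y 1 0 * hi,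
      by linear_combination -(y 1 1 - y 0 0) * hi⟩

lemma card_centralizer_of_nonscalar {K : Type*} [CommRing K] (hK : IsField K)
    {x : Matrix.SpecialLinearGroup (Fin 2) K} (hx : SL2NonScalar x) :
    Nat.card (Subgroup.centralizer {x}) =
      Nat.card {p : K × K // p.1 ^ 2 + p.1 * p.2 * (x 0 0 + x 1 1) + p.2 ^ 2 = 1} := by
  have := hK.isDomain
  symm
  refine Nat.card_eq_of_bijective (fun p => ⟨affineSL2 x p.1 p.2, ?_⟩) ⟨?_, ?_⟩
  · rw [Subgroup.mem_centralizer_singleton_iff, eq_comm, mul_eq_mul_iff_entries]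
    simp only [affineSL2, Matrix.of_apply, Matrix.cons_val', Matrix.cons_val_zero,
      Matrix.cons_val_one, Matrix.cons_val_fin_one]
    refine ⟨?_, ?_, ?_⟩ <;> ring
  · rintro ⟨⟨a, b⟩, hp⟩ ⟨⟨a', b'⟩, hq⟩ h
    have h' := congrArg Subtype.val (congrArg Subtype.val h)
    simp only [affineSL2, ← Matrix.ext_iff, Fin.forall_fin_two, Matrix.of_apply, Matrix.cons_val',
      Matrix.cons_val_zero, Matrix.cons_val_one, Matrix.cons_val_fin_one] at h'
    obtain ⟨⟨e1, e2⟩, e3, e4⟩ := h'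
    have hb : b = b' := by
      rcases hx with hx | hx | hx
      · exact mul_right_cancel₀ hx e2
      · exact mul_right_cancel₀ hx e3
      · exact mul_right_cancel₀ (sub_ne_zero.2 hx) (by linear_combination e1 - e4)
    subst hb
    simpa using e1
  · rintro ⟨y, hy⟩
    rw [Subgroup.mem_centralizer_singleton_iff] at hy
    obtain ⟨a, b, e1, e2, e3, e4⟩ := exists_affine_of_commute hK hx hy.symm
    refine ⟨⟨(a, b), ?_⟩, ?_⟩
    · have hd := det_entries y
      rw [e1, e2, e3, e4] at hd
      linear_combination hd - b ^ 2 * det_entries x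
    · apply Subtype.ext
      rw [Matrix.SpecialLinearGroup.ext_iff]
      simp [Fin.forall_fin_two, affineSL2, e1, e2, e3, e4]

lemma isField_ZMod5 : IsField (ZMod 5) :=
  haveI : Fact (Nat.Prime 5) := ⟨by norm_num⟩
  Field.toIsField (ZMod 5)

lemma card_norm_one_solutions (t : ZMod 5) :
    Nat.card {p : ZMod 5 × ZMod 5 // p.1 ^ 2 + p.1 * p.2 * t + p.2 ^ 2 = 1} =
      if t = 0 then 4 else if t = 1 ∨ t = 4 then 6 else 10 := by
  rw [Nat.card_eq_fintype_card]
  revert t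
  decide +kernel

lemma card_centralizer_ZMod5 {x : Matrix.SpecialLinearGroup (Fin 2) (ZMod 5)}
    (hx : SL2NonScalar x) :
    Nat.card (Subgroup.centralizer {x}) =
      if x 0 0 + x 1 1 = 0 then 4 else if x 0 0 + x 1 1 = 1 ∨ x 0 0 + x 1 1 = 4 then 6 else 10 := by
  rw [card_centralizer_of_nonscalar isField_ZMod5 hx, card_norm_one_solutions]

/-- The companion matrix of `X² - t X + 1` is a non-scalar matrix of trace `t`, so Lagrange's
theorem applied to its centralizer gives a divisor of the group order for each trace `t`. -/
lemma centralizer_card_dvd_card (t : ZMod 5) :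
    (if t = 0 then 4 else if t = 1 ∨ t = 4 then 6 else 10) ∣
      Nat.card (Matrix.SpecialLinearGroup (Fin 2) (ZMod 5)) := by
  let x : Matrix.SpecialLinearGroup (Fin 2) (ZMod 5) :=
    ⟨!![0, -1; 1, t], by rw [Matrix.det_fin_two_of]; ring⟩
  have hx : SL2NonScalar x := Or.inr (Or.inl (show (1 : ZMod 5) ≠ 0 by decide))
  have h := card_centralizer_ZMod5 hx
  have ht : x 0 0 + x 1 1 = t := by simp [x]
  rw [ht] at h
  rw [← h]
  exact Subgroup.card_subgroup_dvd_card _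

lemma ten_lt_card_centralizer_of_not_nonscalar
    {x : Matrix.SpecialLinearGroup (Fin 2) (ZMod 5)} (hx : ¬ SL2NonScalar x) :
    10 < Nat.card (Subgroup.centralizer {x}) := by
  have htop : Subgroup.centralizer {x} = ⊤ := by
    rw [Subgroup.centralizer_eq_top_iff_subset, Set.singleton_subset_iff]
    exact mem_center_of_not_nonscalar hx
  rw [htop, Subgroup.card_top]
  have h6 : 6 ∣ Nat.card (Matrix.SpecialLinearGroup (Fin 2) (ZMod 5)) :=
    centralizer_card_dvd_card 1
  have h10 : 10 ∣ Nat.card (Matrix.SpecialLinearGroup (Fin 2) (ZMod 5)) :=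
    centralizer_card_dvd_card 2
  have hpos : 0 < Nat.card (Matrix.SpecialLinearGroup (Fin 2) (ZMod 5)) := Nat.card_pos
  omega

/-- Counting elements with centralizer of order `n ≤ 10` amounts to counting quadruples of matrix
entries. -/
lemma card_centralizer_eq_card_entries (n : ℕ) (hn : n ≤ 10) :
    Nat.card {x : Matrix.SpecialLinearGroup (Fin 2) (ZMod 5) //
      Nat.card (Subgroup.centralizer {x}) = n} =
    Fintype.card {q : ZMod 5 × ZMod 5 × ZMod 5 × ZMod 5 //
      q.1 * q.2.2.2 - q.2.1 * q.2.2.1 = 1 ∧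
      (q.2.1 ≠ 0 ∨ q.2.2.1 ≠ 0 ∨ q.1 ≠ q.2.2.2) ∧
      (if q.1 + q.2.2.2 = 0 then 4
        else if q.1 + q.2.2.2 = 1 ∨ q.1 + q.2.2.2 = 4 then 6 else 10) = n} := by
  have key (x : Matrix.SpecialLinearGroup (Fin 2) (ZMod 5)) :
      Nat.card (Subgroup.centralizer {x}) = n ↔ SL2NonScalar x ∧
        (if x 0 0 + x 1 1 = 0 then 4
          else if x 0 0 + x 1 1 = 1 ∨ x 0 0 + x 1 1 = 4 then 6 else 10) = n := by
    by_cases hx : SL2NonScalar x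
    · rw [card_centralizer_ZMod5 hx]
      exact (and_iff_right hx).symm
    · have := ten_lt_card_centralizer_of_not_nonscalar hx
      exact ⟨fun h => by omega, fun h => absurd h.1 hx⟩
  rw [← Nat.card_eq_fintype_card]
  refine Nat.card_eq_of_bijective
    (fun x => ⟨(x.1 0 0, x.1 0 1, x.1 1 0, x.1 1 1), det_entries x.1, (key x.1).1 x.2⟩) ⟨?_, ?_⟩
  · rintro ⟨x, hx⟩ ⟨y, hy⟩ h
    apply Subtype.ext
    rw [Matrix.SpecialLinearGroup.ext_iff]
    simpa [Fin.forall_fin_two, and_assoc] using h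
  · rintro ⟨⟨a, b, c, d⟩, hdet, hq⟩
    exact ⟨⟨⟨!![a, b; c, d], by rw [Matrix.det_fin_two_of]; exact hdet⟩, (key _).2 hq⟩, rfl⟩


/-- In the group `H = SL(2, ℤ/5ℤ)` of order 120 (isomorphic to the binary icosahedral
group `BI₁₂₀`), every noncentral element has centralizer of cardinality 4, 6 or 10;
exactly 30 elements have centralizer of cardinality 4, exactly 40 have centralizer of
cardinality 6, and exactly 48 have centralizer of cardinality 10. This reflects the
decomposition `C(BI₁₂₀) ≅ K₂ ∨ (15K₂ ∪ 10K₄ ∪ 6K₈)` of the commuting graph. -/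
theorem centralizer_cards_SL2_ZMod5 :
    (∀ x : Matrix.SpecialLinearGroup (Fin 2) (ZMod 5),
      x ∉ Subgroup.center (Matrix.SpecialLinearGroup (Fin 2) (ZMod 5)) →
      Nat.card (Subgroup.centralizer {x}) = 4 ∨
        Nat.card (Subgroup.centralizer {x}) = 6 ∨
        Nat.card (Subgroup.centralizer {x}) = 10) ∧
    Nat.card {x : Matrix.SpecialLinearGroup (Fin 2) (ZMod 5) //
      Nat.card (Subgroup.centralizer {x}) = 4} = 30 ∧
    Nat.card {x : Matrix.SpecialLinearGroup (Fin 2) (ZMod 5) //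
      Nat.card (Subgroup.centralizer {x}) = 6} = 40 ∧
    Nat.card {x : Matrix.SpecialLinearGroup (Fin 2) (ZMod 5) //
      Nat.card (Subgroup.centralizer {x}) = 10} = 48 := by
  refine ⟨fun x hx => ?_, ?_, ?_, ?_⟩
  · rw [card_centralizer_ZMod5 (not_not.1 (mt mem_center_of_not_nonscalar hx))]
    split_ifs <;> simp
  · rw [card_centralizer_eq_card_entries 4 (by norm_num)]
    decide +kernel
  · rw [card_centralizer_eq_card_entries 6 (by norm_num)]
    decide +kernel
  · rw [card_centralizer_eq_card_entries 10 (by norm_num)]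
    decide +kernel
end
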